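/- arXiv:math/0611929 — 7 statements merged into one kernel-verified Lean document; each statement's English description precedes it below -/
import Mathlib

section
/- For any semigroupoid Λ there exists a spring-less semigroupoid containing Λ: there exist a semigroupoid (Γ, Γ⁽²⁾, ·) and an injective map ι : Λ → Γ such that for all f, g ∈ Λ one has (f,g) ∈ Λ⁽²⁾ if and only if (ι(f), ι(g)) ∈ Γ⁽²⁾, ι(fg) = ι(f)·ι(g) whenever (f,g) ∈ Λ⁽²⁾, and no element of Γ is a spring. -/
/-!
A single new element `e` suffices: on `Λ ∪ {e}` let `e` be idempotent, let `f e = f` be defined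
exactly when `f` is a spring of `Λ`, and let `e f` be undefined for every `f ∈ Λ`. No element is
then a spring, since `(f, e)` is composable whenever `f` is a spring or `f = e`.

The semigroupoid axioms say that, for a composable pair `(f, g)`, the product `f g` has the same
right partners as `g` and the same left partners as `f`, and that composable triples associate.
In particular `f g` is a spring if and only if `g` is, which is why adjoining `e` preserves the
first of these conditions.
-/

universe u

/-- A semigroupoid: a set with a partially defined associative operation
(Exel, Definition 2.1). -/
structure Semigroupoid (Λ : Type u) where
  /-- the set of composable pairs -/
  D2 : Λ → Λ → Prop
  /-- the (partially meaningful) multiplication -/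
  mul : Λ → Λ → Λ
  assoc₁ : ∀ f g h, D2 f g → D2 g h →
    D2 (mul f g) h ∧ D2 f (mul g h) ∧ mul (mul f g) h = mul f (mul g h)
  assoc₂ : ∀ f g h, D2 f g → D2 (mul f g) h →
    D2 g h ∧ D2 f (mul g h) ∧ mul (mul f g) h = mul f (mul g h)
  assoc₃ : ∀ f g h, D2 g h → D2 f (mul g h) →
    D2 f g ∧ D2 (mul f g) h ∧ mul (mul f g) h = mul f (mul g h)

namespace Semigroupoid

variable {Λ : Type u} (G : Semigroupoid Λ)

/-- `f` divides `g` : either `f = g` or `f h = g` for some `h`. -/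
def Divides (f g : Λ) : Prop := f = g ∨ ∃ h, G.D2 f h ∧ G.mul f h = g

/-- `f` and `g` intersect: they admit a common multiple. -/
def Intersects (f g : Λ) : Prop := ∃ m, G.Divides f m ∧ G.Divides g m

/-- `f` and `g` are disjoint: no common multiple. -/
def Disjnt (f g : Λ) : Prop := ¬ G.Intersects f g

/-- `Λ^f`, the set of elements composable with `f` on the right. -/
def lam (f : Λ) : Set Λ := {g | G.D2 f g}

/-- A spring: an element `f` with `Λ^f = ∅`. -/
def IsSpring (f : Λ) : Prop := ∀ g, ¬ G.D2 f g

/-- `H` is a covering of `X`: `H ⊆ X` and every element of `X` intersects some element of `H`. -/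
def IsCovering (H X : Set Λ) : Prop := H ⊆ X ∧ ∀ f ∈ X, ∃ h ∈ H, G.Intersects f h

/-- `H` is a partition of `X`: a covering whose elements are pairwise disjoint. -/
def IsPartition (H X : Set Λ) : Prop :=
  G.IsCovering H X ∧ ∀ h₁ ∈ H, ∀ h₂ ∈ H, h₁ ≠ h₂ → G.Disjnt h₁ h₂

/-- `Λ^{F,G'} = (⋂_{f∈F} Λ^f) ∩ (⋂_{g∈G'} (Λ \ Λ^g))`. -/
def lamFG (F G' : Finset Λ) : Set Λ :=
  {h | (∀ f ∈ F, G.D2 f h) ∧ ∀ g ∈ G', ¬ G.D2 g h}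

end Semigroupoid

section Repn

variable {Λ : Type u} {B : Type*} [Ring B] [StarRing B]

/-- initial projection -/
def QQ (S : Λ → B) (f : Λ) : B := star (S f) * S f

/-- final projection -/
def PP (S : Λ → B) (f : Λ) : B := S f * star (S f)

/-- A representation of a semigroupoid in a unital C*-algebra (Exel, Definition 4.1). -/
structure IsRepn (G : Semigroupoid Λ) (S : Λ → B) : Prop where
  partialIsometry : ∀ f, S f * star (S f) * S f = S f
  map_comp : ∀ f g, G.D2 f g → S f * S g = S (G.mul f g)
  map_ncomp : ∀ f g, ¬ G.D2 f g → S f * S g = 0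
  commQQ : ∀ f g, Commute (QQ S f) (QQ S g)
  commQP : ∀ f g, Commute (QQ S f) (PP S g)
  commPP : ∀ f g, Commute (PP S f) (PP S g)
  orthPP : ∀ f g, G.Disjnt f g → PP S f * PP S g = 0
  QdomP : ∀ f g, G.D2 f g → QQ S f * PP S g = PP S g

/-- the product `∏_{f ∈ F} T f` (of pairwise commuting elements), via a choice of order. -/
noncomputable def fprod (F : Finset Λ) (T : Λ → B) : B := (F.toList.map T).prod

/-- the supremum `⋁_{h ∈ H} PP S h` of commuting final projections,
`P ∨ Q = P + Q - P Q`, i.e. `1 - ∏ (1 - P h)`. -/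
noncomputable def joinP (H : Finset Λ) (S : Λ → B) : B := 1 - fprod H (fun h => 1 - PP S h)

/-- Tight representation (Exel, Definition 4.5). -/
def IsTight (G : Semigroupoid Λ) (S : Λ → B) : Prop :=
  ∀ (F G' H : Finset Λ), G.IsCovering ↑H (G.lamFG F G') →
    joinP H S = fprod F (QQ S) * fprod G' (fun g => 1 - QQ S g)

end Repn

namespace Semigroupoid

section Composability

variable {Λ : Type u} (G : Semigroupoid Λ) {f g h : Λ}

theorem d2_mul_left_iff (hfg : G.D2 f g) : G.D2 (G.mul f g) h ↔ G.D2 g h :=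
  ⟨fun hfgh => (G.assoc₂ f g h hfg hfgh).1, fun hgh => (G.assoc₁ f g h hfg hgh).1⟩

theorem d2_mul_right_iff (hgh : G.D2 g h) : G.D2 f (G.mul g h) ↔ G.D2 f g :=
  ⟨fun hfgh => (G.assoc₃ f g h hgh hfgh).1, fun hfg => (G.assoc₁ f g h hfg hgh).2.1⟩

theorem mul_assoc_of_d2 (hfg : G.D2 f g) (hgh : G.D2 g h) :
    G.mul (G.mul f g) h = G.mul f (G.mul g h) :=
  (G.assoc₁ f g h hfg hgh).2.2

theorem isSpring_mul_iff (hfg : G.D2 f g) : G.IsSpring (G.mul f g) ↔ G.IsSpring g :=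
  forall_congr' fun _ => not_congr (G.d2_mul_left_iff hfg)

end Composability

/-- The semigroupoid with composability relation `D2` and product `mul`, built from the three
conditions `d2_mul_left_iff`, `d2_mul_right_iff` and `mul_assoc_of_d2`, which are together
equivalent to the axioms. -/
def ofD2Iff {Λ : Type u} (D2 : Λ → Λ → Prop) (mul : Λ → Λ → Λ)
    (d2_mul_left : ∀ f g h, D2 f g → (D2 (mul f g) h ↔ D2 g h))
    (d2_mul_right : ∀ f g h, D2 g h → (D2 f (mul g h) ↔ D2 f g))
    (mul_assoc : ∀ f g h, D2 f g → D2 g h → mul (mul f g) h = mul f (mul g h)) :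
    Semigroupoid Λ where
  D2 := D2
  mul := mul
  assoc₁ f g h hfg hgh :=
    ⟨(d2_mul_left f g h hfg).2 hgh, (d2_mul_right f g h hgh).2 hfg, mul_assoc f g h hfg hgh⟩
  assoc₂ f g h hfg hfgh :=
    have hgh : D2 g h := (d2_mul_left f g h hfg).1 hfgh
    ⟨hgh, (d2_mul_right f g h hgh).2 hfg, mul_assoc f g h hfg hgh⟩
  assoc₃ f g h hgh hfgh :=
    have hfg : D2 f g := (d2_mul_right f g h hgh).1 hfgh
    ⟨hfg, (d2_mul_left f g h hfg).2 hgh, mul_assoc f g h hfg hgh⟩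

section SpringUnit

variable {Λ : Type u} (G : Semigroupoid Λ)

/-- Composability in `Λ ∪ {e}`, where `e` is encoded as `none`. -/
def WithSpringUnitD2 : Option Λ → Option Λ → Prop
  | some f, some g => G.D2 f g
  | some f, none => G.IsSpring f
  | none, some _ => False
  | none, none => True

/-- Multiplication in `Λ ∪ {e}`, where `e` is encoded as `none`; the value at `(e, f)` with
`f ∈ Λ` is junk. -/
def withSpringUnitMul : Option Λ → Option Λ → Option Λ
  | some f, some g => some (G.mul f g)
  | some f, none => some f
  | none, _ => none

theorem withSpringUnitD2_mul_left_iff :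
    ∀ x y z : Option Λ, G.WithSpringUnitD2 x y →
      (G.WithSpringUnitD2 (G.withSpringUnitMul x y) z ↔ G.WithSpringUnitD2 y z)
  | none, none, _, _ => Iff.rfl
  | none, some _, _, hxy => hxy.elim
  | some _, none, none, hf => iff_of_true hf trivial
  | some _, none, some h, hf => iff_of_false (hf h) not_false
  | some _, some _, none, hfg => G.isSpring_mul_iff hfg
  | some _, some _, some _, hfg => G.d2_mul_left_iff hfg

theorem withSpringUnitD2_mul_right_iff :
    ∀ x y z : Option Λ, G.WithSpringUnitD2 y z →
      (G.WithSpringUnitD2 x (G.withSpringUnitMul y z) ↔ G.WithSpringUnitD2 x y)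
  | _, none, none, _ => Iff.rfl
  | _, none, some _, hyz => hyz.elim
  | _, some _, none, _ => Iff.rfl
  | none, some _, some _, _ => Iff.rfl
  | some _, some _, some _, hgh => G.d2_mul_right_iff hgh

theorem withSpringUnitMul_assoc :
    ∀ x y z : Option Λ, G.WithSpringUnitD2 x y → G.WithSpringUnitD2 y z →
      G.withSpringUnitMul (G.withSpringUnitMul x y) z =
        G.withSpringUnitMul x (G.withSpringUnitMul y z)
  | none, _, _, _, _ => rfl
  | some _, none, none, _, _ => rfl
  | some _, none, some _, _, hyz => hyz.elim
  | some _, some _, none, _, _ => rfl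
  | some _, some _, some _, hfg, hgh => congrArg some (G.mul_assoc_of_d2 hfg hgh)

/-- The semigroupoid `Λ ∪ {e}`, in which `e` is a right unit for itself and for the springs
of `Λ`, and is composable with nothing else. -/
def withSpringUnit : Semigroupoid (Option Λ) :=
  ofD2Iff G.WithSpringUnitD2 G.withSpringUnitMul G.withSpringUnitD2_mul_left_iff
    G.withSpringUnitD2_mul_right_iff G.withSpringUnitMul_assoc

theorem not_isSpring_withSpringUnit : ∀ x : Option Λ, ¬ G.withSpringUnit.IsSpring x
  | none, he => he none trivial
  | some f, hf =>
    have isSpring_f : G.IsSpring f := fun g => hf (some g)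
    hf none isSpring_f

end SpringUnit

end Semigroupoid

/-- Every semigroupoid embeds in a spring-less semigroupoid. -/
theorem exists_springless_extension {Λ : Type u} (G : Semigroupoid Λ) :
    ∃ (Γ : Type u) (G' : Semigroupoid Γ) (ι : Λ → Γ),
      Function.Injective ι ∧
      (∀ f g : Λ, G.D2 f g ↔ G'.D2 (ι f) (ι g)) ∧
      (∀ f g : Λ, G.D2 f g → ι (G.mul f g) = G'.mul (ι f) (ι g)) ∧
      (∀ x : Γ, ¬ G'.IsSpring x) :=
  ⟨Option Λ, G.withSpringUnit, some, Option.some_injective Λ, fun _ _ => Iff.rfl,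
    fun _ _ _ => rfl, G.not_isSpring_withSpringUnit⟩
end

section
/- Let S be a representation of a semigroupoid Λ in a unital C*-algebra. If f, g, h ∈ Λ are such that (f,g) ∈ Λ⁽²⁾, (f,h) ∈ Λ⁽²⁾ and fg = fh, then S_g = S_h. -/
universe u

namespace IsRepn

variable {Λ : Type u} {B : Type*} [Ring B] [StarRing B] {G : Semigroupoid Λ} {S : Λ → B}

theorem PP_mul_map (hS : IsRepn G S) (g : Λ) : PP S g * S g = S g :=
  hS.partialIsometry g

theorem QQ_mul_map (hS : IsRepn G S) {f g : Λ} (hfg : G.D2 f g) : QQ S f * S g = S g :=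
  calc
    QQ S f * S g = QQ S f * PP S g * S g := by rw [mul_assoc, hS.PP_mul_map]
    _ = PP S g * S g := by rw [hS.QdomP f g hfg]
    _ = S g := hS.PP_mul_map g

theorem star_map_mul_map_mul (hS : IsRepn G S) {f g : Λ} (hfg : G.D2 f g) :
    star (S f) * S (G.mul f g) = S g :=
  calc
    star (S f) * S (G.mul f g) = star (S f) * (S f * S g) := by rw [hS.map_comp f g hfg]
    _ = QQ S f * S g := (mul_assoc ..).symm
    _ = S g := hS.QQ_mul_map hfg

end IsRepn

theorem repn_eq_of_mul_left_cancel_general {Λ : Type u} {B : Type*} [Ring B] [StarRing B]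
    {G : Semigroupoid Λ} {S : Λ → B} (hS : IsRepn G S) {f g h : Λ}
    (hfg : G.D2 f g) (hfh : G.D2 f h) (heq : G.mul f g = G.mul f h) :
    S g = S h :=
  calc
    S g = star (S f) * S (G.mul f g) := (hS.star_map_mul_map_mul hfg).symm
    _ = star (S f) * S (G.mul f h) := by rw [heq]
    _ = S h := hS.star_map_mul_map_mul hfh

/-- If `fg = fh` then any representation satisfies `S g = S h`. -/
theorem repn_eq_of_mul_left_cancel {Λ : Type u} {B : Type*} [CStarAlgebra B]
    {G : Semigroupoid Λ} {S : Λ → B} (hS : IsRepn G S) (f g h : Λ)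
    (hfg : G.D2 f g) (hfh : G.D2 f h) (heq : G.mul f g = G.mul f h) :
    S g = S h :=
  repn_eq_of_mul_left_cancel_general hS hfg hfh heq
end

section
/- Let S be a representation of a semigroupoid Λ in a unital C*-algebra, let F, G ⊆ Λ be finite subsets, and let H be a finite subset of Λ^{F,G}. Then ⋁_{h∈H} P_h ≤ ∏_{f∈F} Q_f · ∏_{g∈G} (1 − Q_g), where the supremum of commuting projections is P ∨ Q = P + Q − PQ. -/
universe u

/-!
Put `E = ∏_{f∈F} Q_f ∏_{g∈G'} (1 - Q_g)`. For `h ∈ Λ^{F,G'}` each factor of `E` fixes `P_h`: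
`Q_f P_h = P_h` because `f h` is defined, and `Q_g P_h = S_g* (S_g S_h) S_h* = 0` because `g h` is
not. Hence `E P_h = P_h`, so each factor of `1 - ⋁ P_h = ∏ (1 - P_h)` fixes `1 - E`. This says that
`1 - E` is a projection below the projection `1 - ⋁ P_h`.
-/

section StarProjection

theorem isStarProjection_mul_star_self {R : Type*} [Semigroup R] [StarMul R] {a : R}
    (ha : a * star a * a = a) : IsStarProjection (a * star a) where
  isIdempotentElem := by rw [IsIdempotentElem, ← mul_assoc, ha]
  isSelfAdjoint := .mul_star_self a

theorem isStarProjection_star_mul_self {R : Type*} [Semigroup R] [StarMul R] {a : R}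
    (ha : a * star a * a = a) : IsStarProjection (star a * a) where
  isIdempotentElem := by rw [IsIdempotentElem, mul_assoc, ← mul_assoc a, ha]
  isSelfAdjoint := .star_mul_self a

theorem isStarProjection_list_prod {R : Type*} [Semiring R] [StarRing R] {l : List R}
    (hl : ∀ p ∈ l, IsStarProjection p) (hcomm : l.Pairwise Commute) :
    IsStarProjection l.prod := by
  induction l with
  | nil => exact .one R
  | cons p l ih =>
    rw [List.forall_mem_cons] at hl
    rw [List.pairwise_cons] at hcomm
    rw [List.prod_cons]
    exact hl.1.mul (ih hl.2 hcomm.2) (Commute.list_prod_right l p hcomm.1)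

theorem commute_one_sub_right {R : Type*} [Ring R] {a b : R} (h : Commute a b) :
    Commute a (1 - b) :=
  (Commute.one_right a).sub_right h

end StarProjection

section FiniteProduct

variable {Λ : Type u} {B : Type*} [Ring B] {F : Finset Λ} {T : Λ → B}

theorem fprod_mul_eq_self {x : B} (h : ∀ f ∈ F, T f * x = x) : fprod F T * x = x :=
  (MulAction.stabilizerSubmonoid B x).list_prod_mem <|
    List.forall_mem_map.2 fun f hf => h f (Finset.mem_toList.1 hf)

theorem commute_fprod {x : B} (h : ∀ f ∈ F, Commute x (T f)) : Commute x (fprod F T) :=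
  Commute.list_prod_right _ _ <|
    List.forall_mem_map.2 fun f hf => h f (Finset.mem_toList.1 hf)

variable [StarRing B]

theorem isStarProjection_fprod (hT : ∀ f ∈ F, IsStarProjection (T f))
    (hcomm : (F : Set Λ).Pairwise fun f g => Commute (T f) (T g)) :
    IsStarProjection (fprod F T) := by
  refine isStarProjection_list_prod
    (List.forall_mem_map.2 fun f hf => hT f (Finset.mem_toList.1 hf)) (List.pairwise_map.2 ?_)
  refine F.nodup_toList.pairwise_of_forall_ne fun f hf g hg hfg => ?_
  exact hcomm (Finset.mem_toList.1 hf) (Finset.mem_toList.1 hg) hfg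

theorem isStarProjection_fprod_one_sub (hT : ∀ f ∈ F, IsStarProjection (T f))
    (hcomm : (F : Set Λ).Pairwise fun f g => Commute (T f) (T g)) :
    IsStarProjection (fprod F fun f => 1 - T f) :=
  isStarProjection_fprod (fun f hf => (hT f hf).one_sub) fun _ hf _ hg hfg =>
    commute_one_sub_right (commute_one_sub_right (hcomm hf hg hfg).symm).symm

end FiniteProduct

section Join

variable {Λ : Type u} {B : Type*} [Ring B] [StarRing B] [PartialOrder B] [StarOrderedRing B]

theorem joinP_le {S : Λ → B} {H : Finset Λ} {E : B}
    (hP : ∀ h ∈ H, IsStarProjection (PP S h))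
    (hcomm : (H : Set Λ).Pairwise fun h k => Commute (PP S h) (PP S k))
    (hE : IsStarProjection E) (hEP : ∀ h ∈ H, E * PP S h = PP S h) : joinP H S ≤ E := by
  have PP_mul_eq : ∀ h ∈ H, PP S h * E = PP S h := fun h hh => by
    have E_comm_PP : Commute E (PP S h) :=
      (hE.isSelfAdjoint.commute_iff (hP h hh).isSelfAdjoint).2
        ((hEP h hh).symm ▸ (hP h hh).isSelfAdjoint)
    rw [← E_comm_PP.eq, hEP h hh]
  have one_sub_PP_mul_eq : ∀ h ∈ H, (1 - PP S h) * (1 - E) = 1 - E := fun h hh => by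
    rw [sub_mul, one_mul, mul_sub, mul_one, PP_mul_eq h hh, sub_self, sub_zero]
  rw [joinP, sub_le_comm]
  exact hE.one_sub.le_of_mul_eq_right (isStarProjection_fprod_one_sub hP hcomm)
    (fprod_mul_eq_self one_sub_PP_mul_eq)

end Join

namespace IsRepn

variable {Λ : Type u} {B : Type*} [Ring B] [StarRing B] {G : Semigroupoid Λ} {S : Λ → B}

theorem isStarProjection_PP (hS : IsRepn G S) (f : Λ) : IsStarProjection (PP S f) :=
  isStarProjection_mul_star_self (hS.partialIsometry f)

theorem isStarProjection_QQ (hS : IsRepn G S) (f : Λ) : IsStarProjection (QQ S f) :=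
  isStarProjection_star_mul_self (hS.partialIsometry f)

theorem QQ_mul_PP_of_not_D2 (hS : IsRepn G S) {g h : Λ} (hgh : ¬ G.D2 g h) :
    QQ S g * PP S h = 0 := by
  rw [QQ, PP, mul_assoc, ← mul_assoc (S g), hS.map_ncomp g h hgh, zero_mul, mul_zero]

theorem one_sub_QQ_mul_PP_of_not_D2 (hS : IsRepn G S) {g h : Λ} (hgh : ¬ G.D2 g h) :
    (1 - QQ S g) * PP S h = PP S h := by
  rw [sub_mul, one_mul, hS.QQ_mul_PP_of_not_D2 hgh, sub_zero]

theorem isStarProjection_fprod_QQ_mul_fprod_one_sub_QQ (hS : IsRepn G S) (F G' : Finset Λ) :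
    IsStarProjection (fprod F (QQ S) * fprod G' (fun g => 1 - QQ S g)) := by
  refine (isStarProjection_fprod (fun f _ => hS.isStarProjection_QQ f)
      fun f _ g _ _ => hS.commQQ f g).mul
    (isStarProjection_fprod_one_sub (fun g _ => hS.isStarProjection_QQ g)
      fun f _ g _ _ => hS.commQQ f g) ?_
  exact commute_fprod fun g _ =>
    commute_one_sub_right (commute_fprod fun f _ => hS.commQQ g f).symm

theorem fprod_QQ_mul_fprod_one_sub_QQ_mul_PP (hS : IsRepn G S) {F G' : Finset Λ} {h : Λ}
    (hh : h ∈ G.lamFG F G') :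
    fprod F (QQ S) * fprod G' (fun g => 1 - QQ S g) * PP S h = PP S h := by
  obtain ⟨hF, hG'⟩ := hh
  rw [mul_assoc,
    fprod_mul_eq_self fun g hg => hS.one_sub_QQ_mul_PP_of_not_D2 (hG' g hg),
    fprod_mul_eq_self fun f hf => hS.QdomP f h (hF f hf)]

end IsRepn

theorem repn_join_le_general {Λ : Type u} {B : Type*} [Ring B] [StarRing B]
    [PartialOrder B] [StarOrderedRing B]
    {G : Semigroupoid Λ} {S : Λ → B} (hS : IsRepn G S)
    (F G' H : Finset Λ) (hH : (↑H : Set Λ) ⊆ G.lamFG F G') :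
    joinP H S ≤ fprod F (QQ S) * fprod G' (fun g => 1 - QQ S g) :=
  joinP_le (fun h _ => hS.isStarProjection_PP h) (fun h _ k _ _ => hS.commPP h k)
    (hS.isStarProjection_fprod_QQ_mul_fprod_one_sub_QQ F G')
    fun _ hh => hS.fprod_QQ_mul_fprod_one_sub_QQ_mul_PP (hH hh)

/-- For any finite `H ⊆ Λ^{F,G'}`,
`⋁_{h∈H} P_h ≤ ∏_{f∈F} Q_f ∏_{g∈G'} (1 - Q_g)`. -/
theorem repn_join_le {Λ : Type u} {B : Type*} [CStarAlgebra B]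
    [PartialOrder B] [StarOrderedRing B]
    {G : Semigroupoid Λ} {S : Λ → B} (hS : IsRepn G S)
    (F G' H : Finset Λ) (hH : (↑H : Set Λ) ⊆ G.lamFG F G') :
    joinP H S ≤ fprod F (QQ S) * fprod G' (fun g => 1 - QQ S g) :=
  repn_join_le_general hS F G' H hH
end

section
/- Let S be a tight representation of a semigroupoid Λ in a unital C*-algebra and let f ∈ Λ be a spring. Then S_f = 0. -/
universe u

namespace Semigroupoid

variable {Λ : Type u} {G : Semigroupoid Λ}

theorem isCovering_empty_iff {X : Set Λ} : G.IsCovering ∅ X ↔ X = ∅ := by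
  simp [IsCovering, Set.eq_empty_iff_forall_notMem]

theorem lamFG_singleton_empty (f : Λ) : G.lamFG {f} ∅ = G.lam f := by
  simp [lamFG, lam]

theorem isSpring_iff_lam_eq_empty {f : Λ} : G.IsSpring f ↔ G.lam f = ∅ :=
  Set.eq_empty_iff_forall_notMem.symm

end Semigroupoid

section Repn

variable {Λ : Type u} {B : Type*} [Ring B]

theorem fprod_empty (T : Λ → B) : fprod ∅ T = 1 := by
  simp [fprod]

theorem fprod_singleton (f : Λ) (T : Λ → B) : fprod {f} T = T f := by
  simp [fprod]

variable [StarRing B] {G : Semigroupoid Λ} {S : Λ → B}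

theorem joinP_empty (S : Λ → B) : joinP ∅ S = 0 := by
  rw [joinP, fprod_empty, sub_self]

theorem IsRepn.mul_QQ_self (hS : IsRepn G S) (f : Λ) : S f * QQ S f = S f := by
  rw [QQ, ← mul_assoc, hS.partialIsometry]

theorem IsTight.fprod_mul_fprod_eq_zero (ht : IsTight G S) {F G' : Finset Λ}
    (hFG : G.lamFG F G' = ∅) :
    fprod F (QQ S) * fprod G' (fun g => 1 - QQ S g) = 0 := by
  have hcover : G.IsCovering ↑(∅ : Finset Λ) (G.lamFG F G') := by
    rw [Finset.coe_empty]
    exact Semigroupoid.isCovering_empty_iff.mpr hFG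
  rw [← ht F G' ∅ hcover, joinP_empty]

theorem IsTight.QQ_eq_zero_of_isSpring (ht : IsTight G S) {f : Λ} (hf : G.IsSpring f) :
    QQ S f = 0 := by
  have hempty : G.lamFG {f} ∅ = ∅ := by
    rw [Semigroupoid.lamFG_singleton_empty, Semigroupoid.isSpring_iff_lam_eq_empty.mp hf]
  simpa only [fprod_singleton, fprod_empty, mul_one] using ht.fprod_mul_fprod_eq_zero hempty

theorem tight_repn_spring_eq_zero_general (hS : IsRepn G S) (ht : IsTight G S)
    (f : Λ) (hf : G.IsSpring f) : S f = 0 :=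
  calc
    S f = S f * QQ S f := (hS.mul_QQ_self f).symm
    _ = 0 := by rw [ht.QQ_eq_zero_of_isSpring hf, mul_zero]

end Repn

/-- A tight representation kills springs. -/
theorem tight_repn_spring_eq_zero {Λ : Type u} {B : Type*} [CStarAlgebra B]
    {G : Semigroupoid Λ} {S : Λ → B} (hS : IsRepn G S) (ht : IsTight G S)
    (f : Λ) (hf : G.IsSpring f) :
    S f = 0 :=
  tight_repn_spring_eq_zero_general hS ht f hf
end

section
/- Let (Λ, d) be a row-finite k-graph without sources, viewed as a semigroupoid. Then for every object v of Λ and every n ∈ ℕ^k, the set Λ^n(v) is a partition of Λ^v. -/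
/-!
Both halves rest on unique factorization. A morphism `m` has exactly one divisor of degree `n`
whenever `n ≤ d m`. Two elements of `Λ^n(v)` with a common multiple `m` are both this divisor, so
they coincide. If `r f = v`, the absence of sources gives `g` of degree `n` with `fg` defined, and
the divisor of degree `n` of `fg` is an element of `Λ^n(v)` that intersects `f`.
-/

universe u

/-- A small category, viewed as a semigroupoid whose elements are all its morphisms:
`(f,g)` is composable iff `s f = r g`; objects are identified with identity morphisms. -/
structure CatSemigroupoid (Λ : Type u) extends Semigroupoid Λ where
  /-- source (domain) of a morphism, as an identity morphism -/
  src : Λ → Λ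
  /-- range (codomain) of a morphism, as an identity morphism -/
  rng : Λ → Λ
  /-- the morphisms which are (identities on) objects -/
  IsObj : Λ → Prop
  obj_src : ∀ f, IsObj (src f)
  obj_rng : ∀ f, IsObj (rng f)
  src_obj : ∀ v, IsObj v → src v = v
  rng_obj : ∀ v, IsObj v → rng v = v
  comp_iff : ∀ f g, D2 f g ↔ src f = rng g
  mul_src : ∀ f, mul f (src f) = f
  rng_mul' : ∀ f, mul (rng f) f = f
  src_mul : ∀ f g, D2 f g → src (mul f g) = src g
  rng_mul : ∀ f g, D2 f g → rng (mul f g) = rng f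

namespace CatSemigroupoid

variable {Λ : Type u} (C : CatSemigroupoid Λ)

/-- for an object `v`, `Λ^v = {g : r g = v}`. -/
def lamObj (v : Λ) : Set Λ := {g | C.rng g = v}

end CatSemigroupoid
/-- A `k`-graph `(Λ, d)`: a small category (viewed as a semigroupoid) together with a degree
functor `d : Λ → ℕ^k` satisfying the unique factorization property. -/
structure KGraph (k : ℕ) (Λ : Type u) extends CatSemigroupoid Λ where
  d : Λ → (Fin k → ℕ)
  d_mul : ∀ f g, D2 f g → d (mul f g) = d f + d g
  factor : ∀ f n m, d f = n + m →
    ∃! p : Λ × Λ, D2 p.1 p.2 ∧ d p.1 = n ∧ d p.2 = m ∧ mul p.1 p.2 = f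

namespace KGraph

variable {k : ℕ} {Λ : Type u} (G : KGraph k Λ)

/-- `Λ^n(v) = {f : r f = v, d f = n}`. -/
def lamN (v : Λ) (n : Fin k → ℕ) : Set Λ := {f | G.rng f = v ∧ G.d f = n}

/-- `(Λ, d)` is row-finite and has no sources: `0 < |Λ^n(v)| < ∞` for every object `v`
and every `n ∈ ℕ^k`. -/
def RowFiniteNoSources : Prop :=
  ∀ v, G.IsObj v → ∀ n : Fin k → ℕ, (G.lamN v n).Finite ∧ (G.lamN v n).Nonempty

end KGraph

section KP

variable {k : ℕ} {Λ : Type u} {B : Type*} [Ring B] [StarRing B]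

/-- A Kumjian–Pask family for a row-finite `k`-graph without sources. -/
structure IsKPFamily (G : KGraph k Λ) (S : Λ → B) : Prop where
  partialIsometry : ∀ f, S f * star (S f) * S f = S f
  kp1_proj : ∀ v, G.IsObj v → star (S v) = S v ∧ S v * S v = S v
  kp1_orth : ∀ u v, G.IsObj u → G.IsObj v → u ≠ v → S u * S v = 0
  kp2 : ∀ f g, G.D2 f g → S (G.mul f g) = S f * S g
  kp3 : ∀ f, star (S f) * S f = S (G.src f)
  kp4 : ∀ v, G.IsObj v → ∀ (n : Fin k → ℕ) (hfin : (G.lamN v n).Finite),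
    S v = ∑ f ∈ hfin.toFinset, S f * star (S f)

end KP

theorem Semigroupoid.divides_mul {Λ : Type u} (S : Semigroupoid Λ) {f g : Λ} (h : S.D2 f g) :
    S.Divides f (S.mul f g) :=
  Or.inr ⟨g, h, rfl⟩

namespace CatSemigroupoid

variable {Λ : Type u} (C : CatSemigroupoid Λ) {f m : Λ}

theorem d2_src (f : Λ) : C.D2 f (C.src f) :=
  (C.comp_iff _ _).2 (C.rng_obj _ (C.obj_src f)).symm

theorem exists_mul_eq_of_divides (h : C.Divides f m) : ∃ g, C.D2 f g ∧ C.mul f g = m := by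
  rcases h with rfl | h
  · exact ⟨C.src f, C.d2_src f, C.mul_src f⟩
  · exact h

theorem rng_eq_of_divides (h : C.Divides f m) : C.rng f = C.rng m := by
  obtain ⟨g, hfg, rfl⟩ := C.exists_mul_eq_of_divides h
  exact (C.rng_mul f g hfg).symm

end CatSemigroupoid

namespace KGraph

variable {k : ℕ} {Λ : Type u} (G : KGraph k Λ) {f g m : Λ} {n : Fin k → ℕ}

theorem exists_divides_d_eq (h : n ≤ G.d m) : ∃ f, G.Divides f m ∧ G.d f = n := by
  obtain ⟨⟨f, g⟩, ⟨hfg, hf, -, rfl⟩, -⟩ :=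
    G.factor m n (G.d m - n) (add_tsub_cancel_of_le h).symm
  exact ⟨f, G.divides_mul hfg, hf⟩

theorem eq_of_divides_of_d_eq (hd : G.d f = G.d g) (hf : G.Divides f m) (hg : G.Divides g m) :
    f = g := by
  obtain ⟨a, hfa, ham⟩ := G.exists_mul_eq_of_divides hf
  obtain ⟨b, hgb, hbm⟩ := G.exists_mul_eq_of_divides hg
  have hda : G.d m = G.d f + G.d a := by rw [← ham, G.d_mul _ _ hfa]
  have hdb : G.d m = G.d f + G.d b := by rw [← hbm, G.d_mul _ _ hgb, hd]
  have hab : G.d b = G.d a := add_left_cancel (hdb.symm.trans hda)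
  have hpair : (f, a) = (g, b) :=
    (G.factor m _ _ hda).unique ⟨hfa, rfl, rfl, ham⟩ ⟨hgb, hd.symm, hab, hbm⟩
  exact congrArg Prod.fst hpair

theorem disjnt_of_d_eq_of_ne (hd : G.d f = G.d g) (hne : f ≠ g) : G.Disjnt f g :=
  fun ⟨_, hf, hg⟩ => hne (G.eq_of_divides_of_d_eq hd hf hg)

theorem exists_mem_lamN_intersects (hf : G.Divides f m) (hn : n ≤ G.d m) :
    ∃ h ∈ G.lamN (G.rng f) n, G.Intersects f h := by
  obtain ⟨h, hhm, hhd⟩ := G.exists_divides_d_eq hn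
  have hrng : G.rng h = G.rng f := (G.rng_eq_of_divides hhm).trans (G.rng_eq_of_divides hf).symm
  exact ⟨h, ⟨hrng, hhd⟩, m, hf, hhm⟩

theorem exists_divides_le_d (h : (G.lamN (G.src f) n).Nonempty) :
    ∃ m, G.Divides f m ∧ n ≤ G.d m := by
  obtain ⟨g, hrng, rfl⟩ := h
  have hfg : G.D2 f g := (G.comp_iff f g).2 hrng.symm
  exact ⟨G.mul f g, G.divides_mul hfg, le_add_self.trans_eq (G.d_mul f g hfg).symm⟩

end KGraph

theorem lamN_isPartition_general {k : ℕ} {Λ : Type u} (G : KGraph k Λ) (v : Λ) (n : Fin k → ℕ)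
    (hext : ∀ f ∈ G.lamObj v, ∃ m, G.Divides f m ∧ n ≤ G.d m) :
    G.IsPartition (G.lamN v n) (G.lamObj v) := by
  refine ⟨⟨fun f hf => hf.1, ?covers⟩, ?disjoint⟩
  case covers =>
    rintro f rfl
    obtain ⟨m, hfm, hn⟩ := hext f rfl
    exact G.exists_mem_lamN_intersects hfm hn
  case disjoint =>
    exact fun f hf g hg hne => G.disjnt_of_d_eq_of_ne (hf.2.trans hg.2.symm) hne

/-- In a row-finite `k`-graph without sources, `Λ^n(v)` is a partition of `Λ^v`. -/
theorem lamN_isPartition {k : ℕ} {Λ : Type u} (G : KGraph k Λ)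
    (hrf : G.RowFiniteNoSources) (v : Λ) (hv : G.IsObj v) (n : Fin k → ℕ) :
    G.toSemigroupoid.IsPartition (G.lamN v n) (G.toCatSemigroupoid.lamObj v) :=
  lamN_isPartition_general G v n fun f _ => G.exists_divides_le_d (hrf _ (G.obj_src f) n).2
end

section
/- Let (Λ, d) be a row-finite k-graph without sources and let {S_f : f ∈ Λ} be a Kumjian–Pask family in a unital C*-algebra. For every object v of Λ and every finite covering H of Λ^v one has S_v = ⋁_{h∈H} S_h S_h*, where the supremum of commuting projections is P ∨ Q = P + Q − PQ. -/
/-!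
Let `n` bound the degrees of the elements of `H`. By (KP4), `S v` is the sum of the final
projections of the paths of degree `n` with range `v`. By positivity, projections whose sum is a
projection are pairwise orthogonal, so these final projections are orthogonal idempotents `e f`.
Conjugating (KP4) at the source of `h` by `S h` shows that the final projection of `h ∈ H` is the
sum of those `e f` for which `h` divides `f`, and joins of such partial sums correspond to unions of
their index sets. By unique factorization, a path of degree `n` which intersects `h ∈ H` is
divisible by `h`; as `H` is a covering, the index sets exhaust all paths of degree `n` with range
`v`, and the join is `S v`.
-/

universe u

section PositiveDefinite

/-- Positive definiteness of an involution: a finite sum of terms `star x * x` vanishes only if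
every `x` does. It makes projections whose sum is a projection pairwise orthogonal. Finite families
are encoded as multisets, so that elements may be repeated. -/
def IsPositiveDefiniteStar (B : Type*) [NonUnitalNonAssocSemiring B] [Star B] : Prop :=
  ∀ m : Multiset B, (m.map fun x => star x * x).sum = 0 → ∀ x ∈ m, x = 0

theorem isPositiveDefiniteStar_of_cstarAlgebra (B : Type*) [NonUnitalCStarAlgebra B] :
    IsPositiveDefiniteStar B := by
  let _ : PartialOrder B := CStarAlgebra.spectralOrder B
  have : StarOrderedRing B := CStarAlgebra.spectralOrderedRing B
  intro m hm x hx
  have hnonneg : ∀ y ∈ m.map fun x => star x * x, 0 ≤ y := by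
    simp only [Multiset.mem_map, forall_exists_index, and_imp, forall_apply_eq_imp_iff₂]
    exact fun y _ => star_mul_self_nonneg y
  exact (CStarRing.star_mul_self_eq_zero_iff x).1 <|
    Multiset.all_zero_of_le_zero_le_of_sum_eq_zero hnonneg hm _ (Multiset.mem_map_of_mem _ hx)

theorem IsPositiveDefiniteStar.eq_zero_of_sum_eq_zero {ι B : Type*} [NonUnitalNonAssocSemiring B]
    [Star B] (hB : IsPositiveDefiniteStar B) {s : Finset ι} {x : ι → B}
    (hsum : ∑ i ∈ s, star (x i) * x i = 0) {i : ι} (hi : i ∈ s) : x i = 0 :=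
  hB (s.val.map x) (by rwa [Multiset.map_map]) _ (Multiset.mem_map_of_mem x hi)

theorem star_mul_mul_self_of_isStarProjection {B : Type*} [NonUnitalSemiring B] [StarRing B]
    {p : B} (hp : IsStarProjection p) (x : B) : star (p * x) * (p * x) = star x * p * x := by
  rw [star_mul, hp.isSelfAdjoint.star_eq, mul_assoc, ← mul_assoc p, hp.isIdempotentElem.eq,
    mul_assoc]

variable {ι B : Type*} [Fintype ι] [Ring B] [StarRing B] {p : ι → B}

theorem IsPositiveDefiniteStar.mul_sum_eq_self (hB : IsPositiveDefiniteStar B)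
    (hp : ∀ i, IsStarProjection (p i)) (hsum : IsIdempotentElem (∑ i, p i)) (i : ι) :
    p i * ∑ j, p j = p i := by
  set q := ∑ j, p j
  have star_q : star q = q := by
    simp only [q, star_sum, (hp _).isSelfAdjoint.star_eq]
  have sum_compress : ∑ j, star (p j * (1 - q)) * (p j * (1 - q)) = 0 := by
    simp only [star_mul_mul_self_of_isStarProjection (hp _), star_sub, star_one, star_q]
    rw [← Finset.sum_mul, ← Finset.mul_sum, hsum.one_sub_mul_self, zero_mul]
  have mul_one_sub := hB.eq_zero_of_sum_eq_zero sum_compress (Finset.mem_univ i)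
  rwa [mul_sub, mul_one, sub_eq_zero, eq_comm] at mul_one_sub

theorem IsPositiveDefiniteStar.orthogonalIdempotents (hB : IsPositiveDefiniteStar B)
    (hp : ∀ i, IsStarProjection (p i)) (hsum : IsIdempotentElem (∑ i, p i)) :
    OrthogonalIdempotents p where
  idem i := (hp i).isIdempotentElem
  ortho i j hij := by
    classical
    have sum_all : ∑ l, p j * p l * p j = p j := by
      rw [← Finset.sum_mul, ← Finset.mul_sum, hB.mul_sum_eq_self hp hsum,
        (hp j).isIdempotentElem.eq]
    have sum_others : ∑ l ∈ Finset.univ.erase j, p j * p l * p j = 0 := by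
      rwa [← Finset.add_sum_erase _ _ (Finset.mem_univ j), (hp j).isIdempotentElem.eq,
        (hp j).isIdempotentElem.eq, add_eq_left] at sum_all
    refine hB.eq_zero_of_sum_eq_zero (x := fun l => p l * p j) ?_
      (Finset.mem_erase.2 ⟨hij, Finset.mem_univ i⟩)
    simpa only [star_mul_mul_self_of_isStarProjection (hp _), (hp j).isSelfAdjoint.star_eq]
      using sum_others

end PositiveDefinite

section OrthogonalIdempotents

theorem orthogonalIdempotents_sum_mul_sum {ι B : Type*} [DecidableEq ι] [Semiring B] {e : ι → B}
    (he : OrthogonalIdempotents e) (s t : Finset ι) :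
    (∑ i ∈ s, e i) * ∑ i ∈ t, e i = ∑ i ∈ s ∩ t, e i := by
  simp only [Finset.sum_mul_sum, he.mul_eq, Finset.sum_ite_eq, Finset.sum_ite_mem]

variable {ι α B : Type*} [DecidableEq ι] [Ring B] {e : ι → B}

theorem orthogonalIdempotents_one_sub_sum_mul_one_sub_sum (he : OrthogonalIdempotents e)
    (s t : Finset ι) :
    (1 - ∑ i ∈ s, e i) * (1 - ∑ i ∈ t, e i) = 1 - ∑ i ∈ s ∪ t, e i := by
  have sum_union : ∑ i ∈ s ∪ t, e i = ∑ i ∈ s, e i + ∑ i ∈ t, e i - ∑ i ∈ s ∩ t, e i :=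
    eq_sub_of_add_eq Finset.sum_union_inter
  rw [sum_union, ← orthogonalIdempotents_sum_mul_sum he]
  noncomm_ring

theorem orthogonalIdempotents_prod_one_sub_sum [DecidableEq α] (he : OrthogonalIdempotents e)
    (A : α → Finset ι) (l : List α) :
    (l.map fun a => 1 - ∑ i ∈ A a, e i).prod = 1 - ∑ i ∈ l.toFinset.biUnion A, e i := by
  induction l with
  | nil => simp
  | cons a l ih =>
    rw [List.map_cons, List.prod_cons, ih, orthogonalIdempotents_one_sub_sum_mul_one_sub_sum he,
      List.toFinset_cons, Finset.biUnion_insert]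

theorem joinP_eq_sum_biUnion [StarRing B] (he : OrthogonalIdempotents e) {S : α → B}
    {H : Finset α} {A : α → Finset ι} (hA : ∀ h ∈ H, PP S h = ∑ i ∈ A h, e i) :
    joinP H S = ∑ i ∈ H.biUnion A, e i := by
  classical
  have map_eq : (H.toList.map fun h => 1 - PP S h) =
      H.toList.map fun h => 1 - ∑ i ∈ A h, e i :=
    List.map_congr_left fun h hh => by rw [hA h (Finset.mem_toList.1 hh)]
  rw [joinP, fprod, map_eq, orthogonalIdempotents_prod_one_sub_sum he, Finset.toList_toFinset,
    sub_sub_cancel]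

end OrthogonalIdempotents

theorem CatSemigroupoid.divides_iff_exists_mul {Λ : Type*} (C : CatSemigroupoid Λ) {f g : Λ} :
    C.Divides f g ↔ ∃ a, C.D2 f a ∧ C.mul f a = g := by
  refine ⟨?_, Or.inr⟩
  rintro (rfl | h)
  · exact ⟨C.src f, by rw [C.comp_iff, C.rng_obj _ (C.obj_src f)], C.mul_src f⟩
  · exact h

namespace KGraph

variable {k : ℕ} {Λ : Type*} (G : KGraph k Λ)

theorem eq_and_eq_of_mul_eq_mul {f f' g g' : Λ} (hfg : G.D2 f g) (hfg' : G.D2 f' g')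
    (hd : G.d f = G.d f') (hmul : G.mul f g = G.mul f' g') : f = f' ∧ g = g' := by
  have d_eq : G.d (G.mul f' g') = G.d f' + G.d g' := G.d_mul _ _ hfg'
  have d_right : G.d g = G.d g' := by
    rwa [← hmul, G.d_mul _ _ hfg, hd, add_right_inj] at d_eq
  exact Prod.ext_iff.1 <| (G.factor _ _ _ d_eq).unique (y₁ := (f, g)) (y₂ := (f', g'))
    ⟨hfg, hd, d_right, hmul⟩ ⟨hfg', rfl, rfl, rfl⟩

theorem divides_of_intersects {f h : Λ} (hfh : G.Intersects f h) (hd : G.d h ≤ G.d f) :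
    G.Divides h f := by
  obtain ⟨m, hfm, hhm⟩ := hfh
  obtain ⟨a, hfa, rfl⟩ := G.divides_iff_exists_mul.1 hfm
  obtain ⟨b, hhb, hb⟩ := G.divides_iff_exists_mul.1 hhm
  obtain ⟨⟨h', c⟩, ⟨hc, d_h', -, rfl⟩, -⟩ :=
    G.factor f (G.d h) (G.d f - G.d h) (add_tsub_cancel_of_le hd).symm
  obtain ⟨-, hca, assoc⟩ := G.assoc₂ h' c a hc hfa
  obtain ⟨rfl, -⟩ := G.eq_and_eq_of_mul_eq_mul hca hhb d_h' (assoc.symm.trans hb.symm)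
  exact Or.inr ⟨c, hc, rfl⟩

theorem bijOn_mul_left (h : Λ) (m : Fin k → ℕ) :
    Set.BijOn (G.mul h) (G.lamN (G.src h) m)
      {f ∈ G.lamN (G.rng h) (G.d h + m) | G.Divides h f} := by
  have composable {g : Λ} (hg : g ∈ G.lamN (G.src h) m) : G.D2 h g :=
    (G.comp_iff _ _).2 hg.1.symm
  refine ⟨fun g hg => ?_, fun g hg g' hg' hmul => ?_, ?_⟩
  · have hhg := composable hg
    exact ⟨⟨G.rng_mul _ _ hhg, by rw [G.d_mul _ _ hhg, hg.2]⟩, Or.inr ⟨g, hhg, rfl⟩⟩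
  · exact (G.eq_and_eq_of_mul_eq_mul (composable hg) (composable hg') rfl hmul).2
  · rintro f ⟨⟨-, hd⟩, hhf⟩
    obtain ⟨g, hhg, rfl⟩ := G.divides_iff_exists_mul.1 hhf
    rw [G.d_mul _ _ hhg, add_right_inj] at hd
    exact ⟨g, ⟨((G.comp_iff _ _).1 hhg).symm, hd⟩, rfl⟩

end KGraph

namespace IsKPFamily

variable {k : ℕ} {Λ B : Type*} [Ring B] [StarRing B] {G : KGraph k Λ} {S : Λ → B}

theorem isStarProjection_PP (hS : IsKPFamily G S) (f : Λ) : IsStarProjection (PP S f) where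
  isIdempotentElem := by rw [IsIdempotentElem, PP, ← mul_assoc, hS.partialIsometry]
  isSelfAdjoint := IsSelfAdjoint.mul_star_self (S f)

theorem orthogonalIdempotents_PP (hS : IsKPFamily G S) (hB : IsPositiveDefiniteStar B) {v : Λ}
    (hv : G.IsObj v) {n : Fin k → ℕ} (hfin : (G.lamN v n).Finite) :
    OrthogonalIdempotents fun f : hfin.toFinset => PP S f := by
  refine hB.orthogonalIdempotents (fun f => hS.isStarProjection_PP f) ?_
  have sum_eq : ∑ f : hfin.toFinset, PP S f = S v :=
    (Finset.sum_coe_sort _ (PP S)).trans (hS.kp4 v hv n hfin).symm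
  rw [sum_eq]
  exact (hS.kp1_proj v hv).2

theorem PP_eq_sum_PP_mul (hS : IsKPFamily G S) (h : Λ) {m : Fin k → ℕ}
    (hfin : (G.lamN (G.src h) m).Finite) :
    PP S h = ∑ g ∈ hfin.toFinset, PP S (G.mul h g) := by
  have PP_mul {g : Λ} (hg : g ∈ hfin.toFinset) :
      S h * PP S g * star (S h) = PP S (G.mul h g) := by
    have hhg : G.D2 h g := (G.comp_iff _ _).2 (hfin.mem_toFinset.1 hg).1.symm
    simp only [PP, hS.kp2 h g hhg, star_mul, mul_assoc]
  calc PP S h = S h * S (G.src h) * star (S h) := by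
        rw [← hS.kp3, ← mul_assoc, hS.partialIsometry, PP]
    _ = ∑ g ∈ hfin.toFinset, S h * PP S g * star (S h) := by
        rw [hS.kp4 _ (G.obj_src h) m hfin, Finset.mul_sum, Finset.sum_mul]
        rfl
    _ = ∑ g ∈ hfin.toFinset, PP S (G.mul h g) := Finset.sum_congr rfl fun _ => PP_mul

open Classical in
theorem PP_eq_sum_of_divides (hS : IsKPFamily G S) (h : Λ) {n : Fin k → ℕ} (hn : G.d h ≤ n)
    (hfin : (G.lamN (G.rng h) n).Finite) :
    PP S h = ∑ f ∈ ({f | G.Divides h f} : Finset hfin.toFinset), PP S f := by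
  obtain ⟨m, rfl⟩ := exists_add_of_le hn
  have bij := G.bijOn_mul_left h m
  have hfin_src : (G.lamN (G.src h) m).Finite :=
    (hfin.subset (Set.sep_subset _ _)).of_injOn bij.mapsTo bij.injOn
  calc PP S h = ∑ g ∈ hfin_src.toFinset, PP S (G.mul h g) := hS.PP_eq_sum_PP_mul h hfin_src
    _ = ∑ f ∈ hfin.toFinset with G.Divides h f, PP S f :=
        Finset.sum_nbij (G.mul h) (fun g hg => by simpa using bij.mapsTo (by simpa using hg))
          (by simpa using bij.injOn) (by simpa using bij.surjOn) fun _ _ => rfl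
    _ = ∑ f ∈ ({f | G.Divides h f} : Finset hfin.toFinset), PP S f := by
        rw [Finset.sum_filter, Finset.sum_filter, ← Finset.sum_coe_sort hfin.toFinset]

end IsKPFamily

theorem kp_cover_join_general {k : ℕ} {Λ B : Type*} [Ring B] [StarRing B]
    (hB : IsPositiveDefiniteStar B) {G : KGraph k Λ} {S : Λ → B} (hS : IsKPFamily G S) {v : Λ}
    (hv : G.IsObj v) {H : Finset Λ}
    (hcov : G.toSemigroupoid.IsCovering ↑H (G.toCatSemigroupoid.lamObj v))
    {n : Fin k → ℕ} (hn : ∀ h ∈ H, G.d h ≤ n) (hfin : (G.lamN v n).Finite) :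
    S v = joinP H S := by
  classical
  obtain ⟨H_subset, intersects⟩ := hcov
  let multiples (h : Λ) : Finset hfin.toFinset := {f | G.Divides h f}
  have PP_eq : ∀ h ∈ H, PP S h = ∑ f ∈ multiples h, PP S f := by
    intro h hh
    obtain rfl : G.rng h = v := H_subset hh
    exact hS.PP_eq_sum_of_divides h (hn h hh) hfin
  have multiples_cover : H.biUnion multiples = Finset.univ := by
    refine Finset.eq_univ_of_forall fun ⟨f, hf⟩ => ?_
    obtain ⟨rng_f, rfl⟩ := hfin.mem_toFinset.1 hf
    obtain ⟨h, hh, hfh⟩ := intersects f rng_f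
    simpa [multiples] using ⟨h, hh, G.divides_of_intersects hfh (hn h hh)⟩
  calc S v = ∑ f : hfin.toFinset, PP S f :=
        (hS.kp4 v hv n hfin).trans (Finset.sum_coe_sort _ (PP S)).symm
    _ = joinP H S := by
        rw [joinP_eq_sum_biUnion (hS.orthogonalIdempotents_PP hB hv hfin) PP_eq, multiples_cover]

/-- For a Kumjian–Pask family, `S v = ⋁_{h∈H} S h S h*` for every finite covering `H`
of `Λ^v`. -/
theorem kp_cover_join {k : ℕ} {Λ : Type u} {B : Type*} [CStarAlgebra B]
    (G : KGraph k Λ) (hrf : G.RowFiniteNoSources)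
    {S : Λ → B} (hS : IsKPFamily G S) (v : Λ) (hv : G.IsObj v)
    (H : Finset Λ)
    (hcov : G.toSemigroupoid.IsCovering ↑H (G.toCatSemigroupoid.lamObj v)) :
    S v = joinP H S :=
  kp_cover_join_general (isPositiveDefiniteStar_of_cstarAlgebra B) hS hv hcov
    (fun _ hh => Finset.le_sup hh) (hrf v hv (H.sup G.d)).1
end

section
/- Suppose no row of the {0,1}-matrix A is identically zero and let {s_x : x ∈ G} be an Exel–Laca A-family in a unital C*-algebra. Fix x ∈ G, let Λ_A(x) = {α ∈ Λ_A : α₁ = x}, and let H be a finite partition of Λ_A(x) (with respect to the divisibility relation of the Markov semigroupoid Λ_A). Then Σ_{h∈H} P_h = P_x. -/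
/-!
More generally, `∑ P_h = P_α` for a finite partition `H` of the multiples of any word `α`, by
induction on how much longer than `α` the words of `H` can be. If `α ∈ H`, disjointness forces
`H = {α}`. Otherwise each one-letter extension `αj` of `α` intersects, hence divides, a member
of `H`. So `α` has finitely many extensions, and the summation relation with `X = {α_n}`, `Y = ∅`
reads `Q_{α_n} = ∑ P_j` over the `j` with `A(α_n, j) = 1`; conjugating by `s_α` gives
`P_α = ∑ P_{αj}`. The multiples of `αj` lying in `H` partition the multiples of `αj`, so the
induction hypothesis applies to each summand.
-/

universe u

variable {I : Type u}

/-- `l` is an admissible word for the 0-1 matrix `A`. -/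
def IsAdmissible (A : I → I → ℕ) (l : List I) : Prop :=
  l ≠ [] ∧ l.Chain' (fun i j => A i j = 1)

/-- The Markov semigroupoid `Λ_A`: all finite admissible words. -/
def MWord (A : I → I → ℕ) : Type u := {l : List I // IsAdmissible A l}

namespace MWord

variable {A : I → I → ℕ}

/-- first letter of a word -/
def headL (α : MWord A) : I := α.val.head α.prop.1

/-- last letter of a word -/
def lastL (α : MWord A) : I := α.val.getLast α.prop.1

/-- `(α, β)` is a composable pair iff `A(α_n, β₁) = 1`. -/
def D2 (α β : MWord A) : Prop := A (lastL α) (headL β) = 1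

/-- `α` divides `β`: `α = β` or `α γ = β` (concatenation) for some admissible `γ`. -/
def Divides (α β : MWord A) : Prop :=
  α = β ∨ ∃ γ : MWord A, D2 α γ ∧ α.val ++ γ.val = β.val

/-- `α` and `β` intersect: they admit a common multiple. -/
def Intersects (α β : MWord A) : Prop := ∃ m : MWord A, Divides α m ∧ Divides β m

/-- `α` and `β` are disjoint. -/
def Disjnt (α β : MWord A) : Prop := ¬ Intersects α β

/-- `H` is a partition of `X`: `H ⊆ X`, every element of `X` intersects some element of
`H`, and the elements of `H` are pairwise disjoint. -/
def IsPartition (H X : Set (MWord A)) : Prop :=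
  H ⊆ X ∧ (∀ f ∈ X, ∃ h ∈ H, Intersects f h) ∧
    ∀ h₁ ∈ H, ∀ h₂ ∈ H, h₁ ≠ h₂ → Disjnt h₁ h₂

end MWord

section EL

variable {B : Type*} [Ring B] [StarRing B]

/-- initial projection -/
def elQ (s : I → B) (x : I) : B := star (s x) * s x

/-- final projection -/
def elP (s : I → B) (x : I) : B := s x * star (s x)

/-- product of a finite family of (commuting) elements, via a choice of order -/
noncomputable def fprodI (F : Finset I) (T : I → B) : B := (F.toList.map T).prod

/-- `A(X,Y,j) = ∏_{x∈X} A(x,j) ∏_{y∈Y} (1 - A(y,j))` -/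
def AXY (A : I → I → ℕ) (X Y : Finset I) (j : I) : ℕ :=
  (∏ x ∈ X, A x j) * ∏ y ∈ Y, (1 - A y j)

/-- An Exel–Laca `A`-family in a unital C*-algebra. -/
structure IsELFamily (A : I → I → ℕ) (s : I → B) : Prop where
  entries : ∀ i j, A i j = 0 ∨ A i j = 1
  partialIsometry : ∀ x, s x * star (s x) * s x = s x
  commQQ : ∀ x y, Commute (elQ s x) (elQ s y)
  commQP : ∀ x y, Commute (elQ s x) (elP s y)
  commPP : ∀ x y, Commute (elP s x) (elP s y)
  orthPP : ∀ x y, x ≠ y → elP s x * elP s y = 0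
  QP : ∀ x y, elQ s x * elP s y = (A x y : B) * elP s y
  summation : ∀ (X Y : Finset I) (hfin : {j | AXY A X Y j ≠ 0}.Finite),
    fprodI X (elQ s) * fprodI Y (fun y => 1 - elQ s y)
      = ∑ j ∈ hfin.toFinset, (AXY A X Y j : B) * elP s j

/-- `s_α = s_{α₁} ⋯ s_{α_n}` for an admissible word `α`. -/
def sWord {A : I → I → ℕ} (s : I → B) (α : MWord A) : B := (α.val.map s).prod

end EL

namespace MWord

variable {A : I → I → ℕ} {α β γ γ' : MWord A}

theorem divides_iff_isPrefix : Divides α β ↔ α.val <+: β.val := by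
  constructor
  · rintro (rfl | ⟨γ, -, hγ⟩)
    exacts [List.prefix_rfl, ⟨γ.val, hγ⟩]
  · rintro ⟨r, hr⟩
    by_cases hnil : r = []
    · exact Or.inl (Subtype.ext (by simpa only [hnil, List.append_nil] using hr))
    · have hchain : (α.val ++ r).IsChain (fun i j => A i j = 1) := hr ▸ β.prop.2
      obtain ⟨-, hchain_r, hlink⟩ := List.isChain_append.1 hchain
      exact Or.inr ⟨⟨r, hnil, hchain_r⟩,
        hlink _ (List.getLast_mem_getLast? α.prop.1) _ (List.head_mem_head? hnil), hr⟩

theorem Divides.refl (α : MWord A) : Divides α α := Or.inl rfl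

theorem Divides.trans (hαβ : Divides α β) (hβγ : Divides β γ) : Divides α γ := by
  rw [divides_iff_isPrefix] at *
  exact hαβ.trans hβγ

theorem Divides.length_le (h : Divides α β) : α.val.length ≤ β.val.length :=
  (divides_iff_isPrefix.1 h).length_le

theorem Divides.eq_of_length_le (h : Divides α β) (hlen : β.val.length ≤ α.val.length) : α = β :=
  Subtype.ext ((divides_iff_isPrefix.1 h).eq_of_length_le hlen)

theorem Divides.total_of_common_multiple (hα : Divides α γ) (hβ : Divides β γ) :
    Divides α β ∨ Divides β α := by
  simp only [divides_iff_isPrefix] at *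
  exact List.prefix_or_prefix_of_prefix hα hβ

theorem intersects_iff : Intersects α β ↔ Divides α β ∨ Divides β α := by
  constructor
  · rintro ⟨γ, hα, hβ⟩
    exact hα.total_of_common_multiple hβ
  · rintro (h | h)
    exacts [⟨β, h, .refl β⟩, ⟨α, .refl α, h⟩]

theorem finite_setOf_divides (β : MWord A) : {α | Divides α β}.Finite :=
  Set.Finite.of_finite_image
    ((β.val.inits.finite_toSet).subset <| Set.image_subset_iff.2 fun _ hα =>
      (List.mem_inits _ _).2 (divides_iff_isPrefix.1 hα))
    Subtype.val_injective.injOn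

/-- The one-letter word `x`. -/
def ofLetter (A : I → I → ℕ) (x : I) : MWord A := ⟨[x], by simp, .singleton x⟩

theorem ofLetter_divides_iff {x : I} : Divides (ofLetter A x) α ↔ headL α = x := by
  rw [divides_iff_isPrefix]
  obtain ⟨_ | ⟨y, l⟩, hα⟩ := α
  · exact absurd rfl hα.1
  · simp [ofLetter, headL, eq_comm]

/-- The words `αj` obtained by appending one letter to `α`; as they are elements of `MWord A`,
the letter `j` automatically satisfies `A(α_n, j) = 1`. -/
def extensions (α : MWord A) : Set (MWord A) := {γ | ∃ j, γ.val = α.val ++ [j]}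

theorem val_eq_of_mem_extensions (hγ : γ ∈ extensions α) : γ.val = α.val ++ [lastL γ] := by
  obtain ⟨j, hj⟩ := hγ
  simp [lastL, hj]

theorem length_of_mem_extensions (hγ : γ ∈ extensions α) :
    γ.val.length = α.val.length + 1 := by
  obtain ⟨j, hj⟩ := hγ
  simp [hj]

theorem divides_of_mem_extensions (hγ : γ ∈ extensions α) : Divides α γ := by
  obtain ⟨j, hj⟩ := hγ
  exact divides_iff_isPrefix.2 ⟨[j], hj.symm⟩

theorem Divides.exists_mem_extensions (h : Divides α β) (hne : α ≠ β) :
    ∃ γ ∈ extensions α, Divides γ β := by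
  obtain ⟨r, hr⟩ := divides_iff_isPrefix.1 h
  cases r with
  | nil => exact absurd (Subtype.ext (by simpa using hr)) hne
  | cons j r =>
    have hpre : α.val ++ [j] <+: β.val := ⟨r, by simpa using hr⟩
    exact ⟨⟨α.val ++ [j], by simp, β.prop.2.prefix hpre⟩, ⟨j, rfl⟩,
      divides_iff_isPrefix.2 hpre⟩

theorem eq_of_mem_extensions_of_divides (hγ : γ ∈ extensions α) (hγ' : γ' ∈ extensions α)
    (h : Divides γ β) (h' : Divides γ' β) : γ = γ' := by
  have hlen : γ.val.length = γ'.val.length := by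
    rw [length_of_mem_extensions hγ, length_of_mem_extensions hγ']
  rcases h.total_of_common_multiple h' with hdiv | hdiv
  · exact hdiv.eq_of_length_le hlen.ge
  · exact (hdiv.eq_of_length_le hlen.le).symm

theorem Divides.extension_divides (h : Divides α β) (hne : α ≠ β) (hγ : γ ∈ extensions α)
    (hβγ : Divides β γ) : Divides γ β := by
  obtain ⟨γ', hγ', hγ'β⟩ := h.exists_mem_extensions hne
  rwa [eq_of_mem_extensions_of_divides hγ hγ' (.refl γ) (hγ'β.trans hβγ)]

open scoped Classical in
theorem sum_eq_sum_extensions {M : Type*} [AddCommMonoid M] {H : Finset (MWord A)}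
    (hH : ∀ h ∈ H, Divides α h) (hα : α ∉ H) (hfin : (extensions α).Finite)
    (f : MWord A → M) :
    ∑ h ∈ H, f h = ∑ γ ∈ hfin.toFinset, ∑ h ∈ H with Divides γ h, f h := by
  have hdisj : Set.PairwiseDisjoint ↑hfin.toFinset fun γ => {h ∈ H | Divides γ h} := by
    intro γ hγ γ' hγ' hne
    rw [Finset.mem_coe, hfin.mem_toFinset] at hγ hγ'
    exact Finset.disjoint_filter.2 fun h _ hγh hγ'h =>
      hne (eq_of_mem_extensions_of_divides hγ hγ' hγh hγ'h)
  have hunion : hfin.toFinset.biUnion (fun γ => {h ∈ H | Divides γ h}) = H := by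
    refine (Finset.biUnion_subset.2 fun γ _ => Finset.filter_subset _ H).antisymm fun h hh => ?_
    obtain ⟨γ, hγ, hγh⟩ := (hH h hh).exists_mem_extensions (ne_of_mem_of_not_mem hh hα).symm
    exact Finset.mem_biUnion.2
      ⟨γ, hfin.mem_toFinset.2 hγ, Finset.mem_filter.2 ⟨hh, hγh⟩⟩
  rw [← Finset.sum_biUnion hdisj, hunion]

theorem bijOn_lastL_extensions (α : MWord A) :
    Set.BijOn lastL (extensions α) {j | A (lastL α) j = 1} := by
  refine ⟨fun γ hγ => ?_, fun γ hγ γ' hγ' hlast => ?_, fun j hj => ?_⟩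
  · have hchain := val_eq_of_mem_extensions hγ ▸ γ.prop.2
    exact (List.isChain_append.1 hchain).2.2 _ (List.getLast_mem_getLast? α.prop.1) _ (by simp)
  · apply Subtype.ext
    rw [val_eq_of_mem_extensions hγ, val_eq_of_mem_extensions hγ', hlast]
  · have hchain : (α.val ++ [j]).IsChain (fun i j => A i j = 1) := by
      refine α.prop.2.append (.singleton j) fun i hi k hk => ?_
      rw [List.getLast?_eq_some_getLast α.prop.1, Option.mem_some_iff] at hi
      rw [List.head?_singleton, Option.mem_some_iff] at hk
      exact hi ▸ hk ▸ hj
    exact ⟨⟨α.val ++ [j], by simp, hchain⟩, ⟨j, rfl⟩, by simp [lastL]⟩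

namespace IsPartition

variable {H X : Set (MWord A)}

theorem exists_mem_divides (hH : IsPartition H {β | Divides α β}) : ∃ h ∈ H, Divides α h := by
  obtain ⟨h, hh, -⟩ := hH.2.1 α (.refl α)
  exact ⟨h, hh, hH.1 hh⟩

theorem eq_singleton_of_mem (hH : IsPartition H {β | Divides α β}) (hα : α ∈ H) : H = {α} := by
  refine Set.eq_singleton_iff_unique_mem.2 ⟨hα, fun h hh => ?_⟩
  by_contra hne
  exact hH.2.2 h hh α hα hne (intersects_iff.2 (.inr (hH.1 hh)))

theorem restrict (hH : IsPartition H X) (hγX : {β | Divides γ β} ⊆ X)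
    (hγH : ∀ h ∈ H, Divides h γ → Divides γ h) :
    IsPartition {h ∈ H | Divides γ h} {β | Divides γ β} := by
  refine ⟨fun h hh => hh.2, fun f hf => ?_, fun h₁ h₁H h₂ h₂H => hH.2.2 h₁ h₁H.1 h₂ h₂H.1⟩
  obtain ⟨h, hh, hfh⟩ := hH.2.1 f (hγX hf)
  refine ⟨h, ⟨hh, ?_⟩, hfh⟩
  rcases intersects_iff.1 hfh with hdvd | hdvd
  · exact hf.trans hdvd
  · exact (Divides.total_of_common_multiple hf hdvd).elim id (hγH h hh)

theorem restrict_extension (hH : IsPartition H {β | Divides α β}) (hα : α ∉ H)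
    (hγ : γ ∈ extensions α) : IsPartition {h ∈ H | Divides γ h} {β | Divides γ β} :=
  hH.restrict (fun _ hβ => (divides_of_mem_extensions hγ).trans hβ)
    fun _ hh => (hH.1 hh).extension_divides (ne_of_mem_of_not_mem hh hα).symm hγ

theorem finite_extensions (hH : IsPartition H {β | Divides α β}) (hfin : H.Finite)
    (hα : α ∉ H) : (extensions α).Finite := by
  refine (hfin.biUnion fun h _ => finite_setOf_divides h).subset fun γ hγ => ?_
  obtain ⟨h, hh, hγh⟩ := (hH.restrict_extension hα hγ).exists_mem_divides
  exact Set.mem_biUnion hh.1 hγh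

end IsPartition

end MWord

section WordProjections

open MWord

variable {B : Type*} [Ring B] {A : I → I → ℕ} {s : I → B}

theorem sWord_of_mem_extensions (s : I → B) {α γ : MWord A} (hγ : γ ∈ extensions α) :
    sWord s γ = sWord s α * s (lastL γ) := by
  rw [sWord, val_eq_of_mem_extensions hγ]
  simp [sWord]

variable [StarRing B]

/-- The final projection `P_α = s_α s_α*` of a word. -/
def elPWord (s : I → B) (α : MWord A) : B := sWord s α * star (sWord s α)

theorem elPWord_ofLetter (s : I → B) (x : I) : elPWord s (ofLetter A x) = elP s x := by
  simp [elPWord, sWord, ofLetter, elP]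

namespace IsELFamily

theorem elQ_eq_sum (hs : IsELFamily A s) {x : I} (hfin : {j | A x j = 1}.Finite) :
    elQ s x = ∑ j ∈ hfin.toFinset, elP s j := by
  have hAXY (j : I) : AXY A {x} ∅ j = A x j := by simp [AXY]
  have hsupp : {j | AXY A {x} ∅ j ≠ 0} = {j | A x j = 1} := by
    ext j
    rcases hs.entries x j with h | h <;> simp [hAXY, h]
  have hsum := hs.summation {x} ∅ (hsupp ▸ hfin)
  simp only [fprodI, Finset.toList_singleton, Finset.toList_empty, List.map_cons, List.map_nil,
    List.prod_cons, List.prod_nil, mul_one, hsupp] at hsum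
  rw [hsum]
  refine Finset.sum_congr rfl fun j hj => ?_
  have hxj : A x j = 1 := hfin.mem_toFinset.1 hj
  rw [hAXY, hxj, Nat.cast_one, one_mul]

theorem sWord_mul_elQ_lastL (hs : IsELFamily A s) (α : MWord A) :
    sWord s α * elQ s (lastL α) = sWord s α := by
  have hfactor : sWord s α = (α.val.dropLast.map s).prod * s (lastL α) := by
    rw [sWord, ← List.dropLast_append_getLast α.prop.1]
    simp [lastL]
  rw [hfactor, elQ, mul_assoc, ← mul_assoc (s _), hs.partialIsometry]

theorem elPWord_eq_sum_extensions (hs : IsELFamily A s) {α : MWord A}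
    (hfin : (extensions α).Finite) : elPWord s α = ∑ γ ∈ hfin.toFinset, elPWord s γ := by
  have hbij := bijOn_lastL_extensions α
  have hrow : {j | A (lastL α) j = 1}.Finite := hbij.image_eq ▸ hfin.image lastL
  calc elPWord s α
      = sWord s α * elQ s (lastL α) * star (sWord s α) := by
        rw [hs.sWord_mul_elQ_lastL, elPWord]
    _ = ∑ j ∈ hrow.toFinset, sWord s α * elP s j * star (sWord s α) := by
        rw [hs.elQ_eq_sum hrow, Finset.mul_sum, Finset.sum_mul]
    _ = ∑ γ ∈ hfin.toFinset, sWord s α * elP s (lastL γ) * star (sWord s α) := by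
        refine (Finset.sum_nbij lastL ?_ ?_ ?_ fun _ _ => rfl).symm
        · simpa using fun γ hγ => hbij.mapsTo hγ
        · simpa using hbij.injOn
        · simpa using hbij.surjOn
    _ = ∑ γ ∈ hfin.toFinset, elPWord s γ := by
        refine Finset.sum_congr rfl fun γ hγ => ?_
        rw [elPWord, sWord_of_mem_extensions s (hfin.mem_toFinset.1 hγ), star_mul, elP]
        simp only [mul_assoc]

theorem sum_elPWord_of_length_lt (hs : IsELFamily A s) (n : ℕ) {α : MWord A}
    {H : Finset (MWord A)} (hH : IsPartition (↑H) {β | Divides α β})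
    (hlen : ∀ h ∈ H, h.val.length < α.val.length + n) :
    ∑ h ∈ H, elPWord s h = elPWord s α := by
  classical
  induction n generalizing α H with
  | zero =>
    obtain ⟨h, hh, hαh⟩ := hH.exists_mem_divides
    exact absurd (hlen h hh) hαh.length_le.not_gt
  | succ n ih =>
    by_cases hα : α ∈ H
    · have hsingleton : H = {α} := by exact_mod_cast hH.eq_singleton_of_mem hα
      rw [hsingleton, Finset.sum_singleton]
    · have hfin := hH.finite_extensions H.finite_toSet hα
      rw [sum_eq_sum_extensions (fun _ hh => hH.1 hh) hα hfin, hs.elPWord_eq_sum_extensions hfin]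
      refine Finset.sum_congr rfl fun γ hγ => ?_
      rw [hfin.mem_toFinset] at hγ
      refine ih (by simpa using hH.restrict_extension hα hγ) fun h hh => ?_
      have hbound := hlen h (Finset.mem_filter.1 hh).1
      rw [length_of_mem_extensions hγ]
      omega

end IsELFamily

end WordProjections

theorem el_partition_sum_general {B : Type*} [Ring B] [StarRing B] {A : I → I → ℕ} {s : I → B}
    (hs : IsELFamily A s) (α : MWord A) (H : Finset (MWord A))
    (hpart : MWord.IsPartition (↑H) {β : MWord A | MWord.Divides α β}) :
    ∑ h ∈ H, sWord s h * star (sWord s h) = sWord s α * star (sWord s α) := by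
  refine hs.sum_elPWord_of_length_lt (H.sup (·.val.length) + 1) hpart fun h hh => ?_
  have hle : h.val.length ≤ H.sup (·.val.length) :=
    Finset.le_sup (f := fun h : MWord A => h.val.length) hh
  omega

/-- If no row of `A` is zero and `H` is a finite partition of
`Λ_A(x) = {α : α₁ = x}`, then `Σ_{h∈H} P_h = P_x` for any Exel–Laca `A`-family. -/
theorem el_partition_sum {B : Type*} [CStarAlgebra B] {A : I → I → ℕ}
    (hrow : ∀ i : I, ∃ j : I, A i j = 1)
    {s : I → B} (hs : IsELFamily A s) (x : I) (H : Finset (MWord A))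
    (hpart : MWord.IsPartition (↑H) {α : MWord A | MWord.headL α = x}) :
    ∑ h ∈ H, sWord s h * star (sWord s h) = elP s x := by
  simp only [← MWord.ofLetter_divides_iff] at hpart
  exact (el_partition_sum_general hs _ H hpart).trans (elPWord_ofLetter s x)
end
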